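/- Let (X,d) be a complete CAT(0) space, x₁,…,xₙ ∈ X, and w₁,…,wₙ ∈ [0,1] nonnegative weights not all zero. Then every median of x₁,…,xₙ with respect to w₁,…,wₙ, i.e. every minimizer over X of F₁(x)=∑_{i=1}^n wᵢ d(x,xᵢ), lies in cl co {x₁,…,xₙ}, the closure of the convex hull of {x₁,…,xₙ}. -/

import Mathlib

/-!
Suppose a median `z` were at distance `D > 0` from the convex hull `C` of the points.  A point
`c ∈ C` close enough to realizing this distance is strictly closer than `z` to a given `y ∈ C`:
all points of the geodesic from `c` to `y` lie in `C`, hence at distance at least `D` from `z`, and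
the CAT(0) inequality along this geodesic gives `dist c y ^ 2 ≤ dist z y ^ 2 - D ^ 2` up to an error
that vanishes as `dist z c → D` (`exists_forall_dist_lt_of_infDist_pos`).  Since there are finitely
many points `x i`, one `c` serves all of them, and it has a smaller weighted sum of distances
than `z`.

Near-minimizers replace the metric projection onto the closure of `C`, so neither its existence nor
the convexity of the closure has to be established.
-/

open Set

/-- A geodesic from `x` to `y`: an isometric parametrization of `[0, d(x,y)]`. -/
def IsGeodesic {X : Type*} [MetricSpace X] (x y : X) (γ : ℝ → X) : Prop :=
  γ 0 = x ∧ γ (dist x y) = y ∧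
    ∀ s ∈ Set.Icc (0 : ℝ) (dist x y), ∀ t ∈ Set.Icc (0 : ℝ) (dist x y),
      dist (γ s) (γ t) = |s - t|

/-- The union of all geodesic segments from `x` to `y` (in a uniquely geodesic
space this is the geodesic segment `[x,y]`). -/
def segs {X : Type*} [MetricSpace X] (x y : X) : Set X :=
  ⋃ γ ∈ {γ : ℝ → X | IsGeodesic x y γ}, γ '' Set.Icc (0 : ℝ) (dist x y)

/-- A geodesic metric space: every two points are joined by a geodesic. -/
def GeodesicSpace (X : Type*) [MetricSpace X] : Prop :=
  ∀ x y : X, ∃ γ : ℝ → X, IsGeodesic x y γ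

/-- A uniquely geodesic metric space. -/
def UniquelyGeodesic (X : Type*) [MetricSpace X] : Prop :=
  GeodesicSpace X ∧ ∀ (x y : X) (γ₁ γ₂ : ℝ → X), IsGeodesic x y γ₁ → IsGeodesic x y γ₂ →
    Set.EqOn γ₁ γ₂ (Set.Icc (0 : ℝ) (dist x y))

/-- A CAT(0) space: a geodesic space satisfying the quadratic comparison inequality. -/
def CAT0 (X : Type*) [MetricSpace X] : Prop :=
  GeodesicSpace X ∧
    ∀ (x y z : X) (γ : ℝ → X), IsGeodesic x y γ → ∀ t ∈ Set.Icc (0 : ℝ) 1,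
      dist (γ (t * dist x y)) z ^ 2 ≤
        (1 - t) * dist x z ^ 2 + t * dist y z ^ 2 - t * (1 - t) * dist x y ^ 2

/-- A flat CAT(0) space: the comparison inequality holds with equality. -/
def FlatCAT0 (X : Type*) [MetricSpace X] : Prop :=
  GeodesicSpace X ∧
    ∀ (x y z : X) (γ : ℝ → X), IsGeodesic x y γ → ∀ t ∈ Set.Icc (0 : ℝ) 1,
      dist (γ (t * dist x y)) z ^ 2 =
        (1 - t) * dist x z ^ 2 + t * dist y z ^ 2 - t * (1 - t) * dist x y ^ 2

/-- Convexity: a set containing every geodesic segment between its points. -/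
def GConvex {X : Type*} [MetricSpace X] (C : Set X) : Prop :=
  ∀ x ∈ C, ∀ y ∈ C, segs x y ⊆ C

/-- The (geodesic) convex hull: the smallest convex set containing `S`. -/
def gconvHull {X : Type*} [MetricSpace X] (S : Set X) : Set X :=
  ⋂₀ {C : Set X | GConvex C ∧ S ⊆ C}

/-- Threading of a set: the union of all geodesic segments with endpoints in `S`. -/
def thr {X : Type*} [MetricSpace X] (S : Set X) : Set X :=
  ⋃ x ∈ S, ⋃ y ∈ S, segs x y

lemma gConvex_gconvHull {X : Type*} [MetricSpace X] (S : Set X) : GConvex (gconvHull S) := by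
  intro a ha b hb p hp C hC
  exact hC.1 a (ha C hC) b (hb C hC) hp

lemma subset_gconvHull {X : Type*} [MetricSpace X] (S : Set X) : S ⊆ gconvHull S :=
  fun _ ha _ hC => hC.2 ha

/-- The CAT(0) inequality along a geodesic inside a convex set, whose points are no closer to `z`
than the set is. -/
lemma infDist_sq_le_of_gConvex {X : Type*} [MetricSpace X] (hX : CAT0 X) {C : Set X}
    (hC : GConvex C) {c y : X} (hc : c ∈ C) (hy : y ∈ C) (z : X) {t : ℝ}
    (ht : t ∈ Icc (0 : ℝ) 1) :
    Metric.infDist z C ^ 2 ≤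
      (1 - t) * dist c z ^ 2 + t * dist y z ^ 2 - t * (1 - t) * dist c y ^ 2 := by
  obtain ⟨γ, hγ⟩ := hX.1 c y
  have hmem : γ (t * dist c y) ∈ C :=
    hC c hc y hy <| mem_biUnion (show γ ∈ {γ | IsGeodesic c y γ} from hγ) <|
      mem_image_of_mem _ ⟨mul_nonneg ht.1 dist_nonneg, mul_le_of_le_one_left dist_nonneg ht.2⟩
  have hle : Metric.infDist z C ≤ dist (γ (t * dist c y)) z := by
    rw [dist_comm]
    exact Metric.infDist_le_dist_of_mem hmem
  exact (pow_le_pow_left₀ Metric.infDist_nonneg hle 2).trans (hX.2 c y z γ hγ t ht)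

/-- Points of a convex set that nearly realize its distance to an exterior point `z` are strictly
closer than `z` to any given point of the set. -/
lemma exists_forall_dist_lt_of_infDist_pos {X : Type*} [MetricSpace X] (hX : CAT0 X) {C : Set X}
    (hC : GConvex C) {y : X} (hy : y ∈ C) {z : X} (hD : 0 < Metric.infDist z C) :
    ∃ ε > 0, ∀ c ∈ C, dist z c < Metric.infDist z C + ε → dist c y < dist z y := by
  set D := Metric.infDist z C with hDdef
  -- `M` bounds `dist c y` for near-minimizers `c`; `t` and `ε` make each of the two error terms
  -- `t * dist c y ^ 2` and `(dist z c ^ 2 - D ^ 2) / t` at most `D ^ 2 / 4`.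
  set M := D + 1 + dist z y with hM
  have hzy : 0 ≤ dist z y := dist_nonneg
  have hMpos : 0 < M := by linarith
  set t := D ^ 2 / (4 * M ^ 2) with ht
  have htpos : 0 < t := by positivity
  have htM : t * M ^ 2 = D ^ 2 / 4 := by
    rw [ht]; field_simp
  have ht1 : t ≤ 1 := by
    rw [ht, div_le_one (by positivity)]
    nlinarith
  refine ⟨min 1 (t * D ^ 2 / (4 * (2 * D + 1))), lt_min one_pos (by positivity), ?_⟩
  intro c hc hcz
  set ε := min 1 (t * D ^ 2 / (4 * (2 * D + 1))) with hε
  have hε1 : ε ≤ 1 := min_le_left _ _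
  have hεpos : 0 < ε := lt_min one_pos (by positivity)
  have hε2 : (2 * D + 1) * ε ≤ t * D ^ 2 / 4 := by
    have h : ε ≤ t * D ^ 2 / (4 * (2 * D + 1)) := min_le_right _ _
    rw [le_div_iff₀ (by positivity)] at h
    linarith
  have hcat := infDist_sq_le_of_gConvex hX hC hc hy z ⟨htpos.le, ht1⟩
  rw [← hDdef, dist_comm c z, dist_comm y z] at hcat
  have hcD : D ≤ dist z c := Metric.infDist_le_dist_of_mem hc
  have hcy : dist c y ≤ M := by
    have := dist_triangle_left c y z
    linarith
  have hcy2 : dist c y ^ 2 ≤ M ^ 2 := pow_le_pow_left₀ dist_nonneg hcy 2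
  have hcz2 : dist z c ^ 2 ≤ D ^ 2 + t * D ^ 2 / 4 := by
    have : dist z c ^ 2 ≤ (D + ε) ^ 2 := pow_le_pow_left₀ dist_nonneg hcz.le 2
    nlinarith
  have h1 : (1 - t) * (dist z c ^ 2 - D ^ 2) ≤ t * D ^ 2 / 4 := by
    have : 0 ≤ dist z c ^ 2 - D ^ 2 := by nlinarith
    nlinarith
  have h2 : t * (t * dist c y ^ 2) ≤ t * (D ^ 2 / 4) := by
    rw [← htM]; gcongr
  have h3 : t * dist c y ^ 2 < t * dist z y ^ 2 := by
    have : 0 < t * D ^ 2 := by positivity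
    nlinarith
  exact lt_of_pow_lt_pow_left₀ 2 hzy (lt_of_mul_lt_mul_left h3 htpos.le)

/-- Every median of finitely many points in a complete CAT(0) space lies in the
closure of their convex hull. -/
theorem median_mem_closure_convHull {X : Type*} [MetricSpace X] [CompleteSpace X]
    (hX : CAT0 X) (n : ℕ) (x : Fin n → X) (w : Fin n → ℝ)
    (hw0 : ∀ i, 0 ≤ w i) (hw1 : ∀ i, w i ≤ 1) (hwne : ∃ i, w i ≠ 0) (xstar : X)
    (hmin : ∀ y : X, ∑ i, w i * dist xstar (x i) ≤ ∑ i, w i * dist y (x i)) :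
    xstar ∈ closure (gconvHull (Set.range x)) := by
  obtain ⟨j, hj⟩ := hwne
  have hmem : ∀ i, x i ∈ gconvHull (range x) := fun i => subset_gconvHull _ (mem_range_self i)
  have hne : (gconvHull (range x)).Nonempty := ⟨x j, hmem j⟩
  by_contra hnot
  have hD : 0 < Metric.infDist xstar (gconvHull (range x)) :=
    lt_of_le_of_ne Metric.infDist_nonneg
      fun h => hnot ((Metric.mem_closure_iff_infDist_zero hne).2 h.symm)
  choose ε hε hlt using fun i =>
    exists_forall_dist_lt_of_infDist_pos hX (gConvex_gconvHull (range x)) (hmem i) hD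
  obtain ⟨i₀, -, hi₀⟩ := Finset.exists_min_image Finset.univ ε ⟨j, Finset.mem_univ j⟩
  obtain ⟨c, hc, hcd⟩ := (Metric.infDist_lt_iff hne).1 (lt_add_of_pos_right _ (hε i₀))
  have hcl : ∀ i, dist c (x i) < dist xstar (x i) := fun i =>
    hlt i c hc (hcd.trans_le (by gcongr; exact hi₀ i (Finset.mem_univ i)))
  refine (hmin c).not_gt (Finset.sum_lt_sum
    (fun i _ => mul_le_mul_of_nonneg_left (hcl i).le (hw0 i)) ⟨j, Finset.mem_univ j, ?_⟩)
  exact mul_lt_mul_of_pos_left (hcl j) ((hw0 j).lt_of_ne' hj)
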